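/- arXiv:1811.02346 — 2 statements merged into one kernel-verified Lean document; each statement's English description precedes it below -/
import Mathlib

section
/- Let n ≥ 3, let Ω ⊆ ℝⁿ be a connected open set, let α, γ ∈ ℝⁿ, c ∈ ℝ, and let B be a skew-symmetric real n×n matrix. Suppose the vector field X = X₍α,c,B,γ₎ is nowhere vanishing on Ω and the vector field |X|⁻²X is curl-free on Ω, i.e. ∂ⱼ(|X|⁻²Xₖ) = ∂ₖ(|X|⁻²Xⱼ) for all j,k (this holds in particular when X = |∇φ|⁻²∇φ for a limiting Carleman weight φ on Ω). Then: (i) Bⱼₖγₗ + Bₖₗγⱼ + Bₗⱼγₖ = 0 for all 1 ≤ j,k,l ≤ n; and (ii) c·B = γ∧α, i.e. c·Bⱼₖ = γⱼαₖ − αⱼγₖ for all 1 ≤ j,k ≤ n. -/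
open scoped BigOperators
open Matrix

noncomputable section

/-- Euclidean dot product on `Fin n → ℝ`. -/
def dotp {n : ℕ} (u v : Fin n → ℝ) : ℝ := ∑ i, u i * v i

/-- Squared Euclidean norm on `Fin n → ℝ`. -/
def normSq {n : ℕ} (u : Fin n → ℝ) : ℝ := ∑ i, u i ^ 2

/-- `pd X j k x = ∂ⱼ Xₖ (x)`, the partial derivative of the `k`-th component of the
vector field `X` in the `j`-th coordinate direction. -/
def pd {n : ℕ} (X : (Fin n → ℝ) → (Fin n → ℝ)) (j k : Fin n) (x : Fin n → ℝ) : ℝ :=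
  fderiv ℝ (fun y => X y k) x (Pi.single j (1 : ℝ))

/-- `pdS f j x = ∂ⱼ f (x)` for a scalar function `f`. -/
def pdS {n : ℕ} (f : (Fin n → ℝ) → ℝ) (j : Fin n) (x : Fin n → ℝ) : ℝ :=
  fderiv ℝ f x (Pi.single j (1 : ℝ))

/-- Second partial derivative `pd2 X a b c x = ∂ₐ ∂_b X_c (x)`. -/
def pd2 {n : ℕ} (X : (Fin n → ℝ) → (Fin n → ℝ)) (a b c : Fin n) (x : Fin n → ℝ) : ℝ :=
  fderiv ℝ (fun y => pd X b c y) x (Pi.single a (1 : ℝ))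

/-- Gradient of a scalar function on `Fin n → ℝ`, as a vector field. -/
def grad {n : ℕ} (φ : (Fin n → ℝ) → ℝ) (x : Fin n → ℝ) : Fin n → ℝ :=
  fun i => fderiv ℝ φ x (Pi.single i (1 : ℝ))

/-- `X` is a conformal Killing vector field on `Ω`:
`∂ⱼXₖ + ∂ₖXⱼ = λ δⱼₖ` on `Ω` for some scalar function `λ`. -/
def IsCKF {n : ℕ} (Ω : Set (Fin n → ℝ)) (X : (Fin n → ℝ) → (Fin n → ℝ)) : Prop :=
  ∃ lam : (Fin n → ℝ) → ℝ, ∀ x ∈ Ω, ∀ j k : Fin n,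
    pd X j k x + pd X k j x = lam x * (if j = k then (1 : ℝ) else 0)

/-- The model conformal Killing field `X_{(α,c,B,γ)}(x) = (α·x)x − ½|x|²α + cx + Bx + γ`. -/
def Xmodel {n : ℕ} (α : Fin n → ℝ) (c : ℝ) (B : Matrix (Fin n) (Fin n) ℝ) (γ : Fin n → ℝ)
    (x : Fin n → ℝ) : Fin n → ℝ :=
  fun k => dotp α x * x k - (1 / 2) * normSq x * α k + c * x k + B.mulVec x k + γ k

/-- The skew-symmetric matrix `u ∧ v` with entries `(u∧v)ⱼₖ = uⱼvₖ − vⱼuₖ`. -/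
def wedge {n : ℕ} (u v : Fin n → ℝ) : Matrix (Fin n) (Fin n) ℝ :=
  Matrix.of fun j k => u j * v k - v j * u k

/-!
If `f X` is curl-free for some nonvanishing function `f`, then `dX♭ = -f⁻¹ df ∧ X♭`, so the
Frobenius three-form `X♭ ∧ dX♭` vanishes. For the model field `X` its components are polynomials,
so vanishing on a nonempty open set they vanish on all of `ℝⁿ`. Their constant terms are those
of `-2 B ∧ γ`, and since `n ≥ 3` there is, for all `j` and `k`, a third index `m`: the coefficient
of `xₘ` in the `(j, k, m)` component is `2 (γ ∧ α - c B)ⱼₖ`.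
-/

open scoped ContDiff

/-- The component `(dX♭)ⱼₖ = ∂ⱼXₖ - ∂ₖXⱼ` of the exterior derivative of the one-form `X♭`. -/
def curl {n : ℕ} (X : (Fin n → ℝ) → (Fin n → ℝ)) (j k : Fin n) (x : Fin n → ℝ) : ℝ :=
  pd X j k x - pd X k j x

/-- The component `(X♭ ∧ dX♭)ⱼₖₗ` of the three-form whose vanishing is the Frobenius
integrability condition for the hyperplane distribution orthogonal to `X`. -/
def frobeniusForm {n : ℕ} (X : (Fin n → ℝ) → (Fin n → ℝ)) (j k l : Fin n) (x : Fin n → ℝ) : ℝ :=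
  curl X j k x * X x l + curl X k l x * X x j + curl X l j x * X x k

section PartialDerivatives

variable {n : ℕ} {x : Fin n → ℝ}

theorem pdS_add {f g : (Fin n → ℝ) → ℝ} (hf : DifferentiableAt ℝ f x)
    (hg : DifferentiableAt ℝ g x) (j : Fin n) :
    pdS (fun y => f y + g y) j x = pdS f j x + pdS g j x := by
  simp [pdS, fderiv_fun_add hf hg]

theorem pdS_mul {f g : (Fin n → ℝ) → ℝ} (hf : DifferentiableAt ℝ f x)
    (hg : DifferentiableAt ℝ g x) (j : Fin n) :
    pdS (fun y => f y * g y) j x = pdS f j x * g x + f x * pdS g j x := by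
  simp [pdS, fderiv_fun_mul hf hg, mul_comm, add_comm]

theorem pd_smul {f : (Fin n → ℝ) → ℝ} {X : (Fin n → ℝ) → (Fin n → ℝ)}
    (hf : DifferentiableAt ℝ f x) (hX : DifferentiableAt ℝ X x) (j k : Fin n) :
    pd (fun y => f y • X y) j k x = pdS f j x * X x k + f x * pd X j k x :=
  pdS_mul hf (differentiableAt_pi.1 hX k) j

theorem pdS_frobeniusForm {X : (Fin n → ℝ) → (Fin n → ℝ)} (hX : DifferentiableAt ℝ X x)
    (hcurl : ∀ a b, DifferentiableAt ℝ (curl X a b) x) (m j k l : Fin n) :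
    pdS (frobeniusForm X j k l) m x =
      pdS (curl X j k) m x * X x l + curl X j k x * pd X m l x
        + (pdS (curl X k l) m x * X x j + curl X k l x * pd X m j x)
        + (pdS (curl X l j) m x * X x k + curl X l j x * pd X m k x) := by
  have hcoord := differentiableAt_pi.1 hX
  have hterm (a b i : Fin n) := (hcurl a b).fun_mul (hcoord i)
  have pdS_term (a b i : Fin n) : pdS (fun y => curl X a b y * X y i) m x =
      pdS (curl X a b) m x * X x i + curl X a b x * pd X m i x :=
    pdS_mul (hcurl a b) (hcoord i) m
  unfold frobeniusForm
  rw [pdS_add ((hterm j k l).fun_add (hterm k l j)) (hterm l j k),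
    pdS_add (hterm j k l) (hterm k l j), pdS_term, pdS_term, pdS_term]

theorem frobeniusForm_eq_zero_of_curl_smul_eq_zero {f : (Fin n → ℝ) → ℝ}
    {X : (Fin n → ℝ) → (Fin n → ℝ)} (hf : DifferentiableAt ℝ f x) (hX : DifferentiableAt ℝ X x)
    (hfx : f x ≠ 0) (hcurl : ∀ j k, curl (fun y => f y • X y) j k x = 0) (j k l : Fin n) :
    frobeniusForm X j k l x = 0 := by
  have mul_curl (a b : Fin n) : f x * curl X a b x = pdS f b x * X x a - pdS f a x * X x b := by
    have h := hcurl a b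
    simp only [curl, pd_smul hf hX] at h ⊢
    linear_combination h
  apply mul_left_cancel₀ hfx
  unfold frobeniusForm
  linear_combination X x l * mul_curl j k + X x j * mul_curl k l + X x k * mul_curl l j

end PartialDerivatives

section DotProduct

variable {n : ℕ}

theorem normSq_eq_zero_iff {u : Fin n → ℝ} : normSq u = 0 ↔ u = 0 := by
  simpa [normSq, dotProduct, sq] using dotProduct_self_eq_zero (v := u)

theorem contDiff_normSq : ContDiff ℝ ω (normSq (n := n)) := by
  unfold normSq
  fun_prop

theorem contDiff_dotp (u : Fin n → ℝ) : ContDiff ℝ ω (dotp u) := by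
  unfold dotp
  fun_prop

theorem hasFDerivAt_dotp (u x : Fin n → ℝ) :
    HasFDerivAt (dotp u) (∑ i, u i • (ContinuousLinearMap.proj i : (Fin n → ℝ) →L[ℝ] ℝ)) x :=
  HasFDerivAt.fun_sum fun i _ => (hasFDerivAt_apply i x).const_mul (u i)

theorem hasFDerivAt_normSq (x : Fin n → ℝ) :
    HasFDerivAt normSq (∑ i, (2 * x i) • (ContinuousLinearMap.proj i : (Fin n → ℝ) →L[ℝ] ℝ)) x :=
  HasFDerivAt.fun_sum fun i _ => by
    simpa using (hasFDerivAt_apply (𝕜 := ℝ) i x).pow 2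

end DotProduct

section Model

variable {n : ℕ} (α γ : Fin n → ℝ) (c : ℝ) {B : Matrix (Fin n) (Fin n) ℝ}

theorem contDiff_Xmodel : ContDiff ℝ ω (Xmodel α c B γ) := by
  have := contDiff_dotp α
  have := contDiff_normSq (n := n)
  unfold Xmodel mulVec dotProduct
  fun_prop

theorem Xmodel_zero : Xmodel α c B γ 0 = γ := by
  ext k
  simp [Xmodel, dotp, normSq]

theorem pd_Xmodel (j k : Fin n) (x : Fin n → ℝ) :
    pd (Xmodel α c B γ) j k x =
      α j * x k - x j * α k + B k j + (dotp α x + c) * if k = j then 1 else 0 := by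
  have hcoord := hasFDerivAt_apply (𝕜 := ℝ) k x
  have hX : HasFDerivAt (fun y => Xmodel α c B γ y k) _ x :=
    (((((hasFDerivAt_dotp α x).mul hcoord).sub
      (((hasFDerivAt_normSq x).const_mul (1 / 2)).mul_const (α k))).add
      (hcoord.const_mul c)).add (hasFDerivAt_dotp (B k) x)).add_const (γ k)
  simp only [pd, hX.fderiv, _root_.add_apply, _root_.sub_apply, _root_.smul_apply,
    _root_.sum_apply, ContinuousLinearMap.proj_apply, Pi.single_apply, smul_eq_mul, mul_ite,
    mul_one, mul_zero, Finset.sum_ite_eq', Finset.mem_univ, if_true]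
  split_ifs <;> ring

theorem curl_Xmodel (hB : Bᵀ = -B) (j k : Fin n) (x : Fin n → ℝ) :
    curl (Xmodel α c B γ) j k x = 2 * (α j * x k - x j * α k - B j k) := by
  have hBkj : B k j = -B j k := congr_fun₂ hB j k
  simp only [curl, pd_Xmodel, hBkj, eq_comm (a := k)]
  ring

theorem contDiff_curl_Xmodel (hB : Bᵀ = -B) (j k : Fin n) :
    ContDiff ℝ ω (curl (Xmodel α c B γ) j k) := by
  simp only [funext (curl_Xmodel α γ c hB j k)]
  fun_prop

theorem contDiff_frobeniusForm_Xmodel (hB : Bᵀ = -B) (j k l : Fin n) :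
    ContDiff ℝ ω (frobeniusForm (Xmodel α c B γ) j k l) := by
  have := contDiff_Xmodel α γ c (B := B)
  have := contDiff_curl_Xmodel α γ c hB
  unfold frobeniusForm
  fun_prop

theorem frobeniusForm_Xmodel_eq_zero_of_eqOn (hB : Bᵀ = -B) {Ω : Set (Fin n → ℝ)}
    (hΩ : IsOpen Ω) (hne : Ω.Nonempty) {j k l : Fin n}
    (hzero : Set.EqOn (frobeniusForm (Xmodel α c B γ) j k l) 0 Ω) :
    frobeniusForm (Xmodel α c B γ) j k l = 0 := by
  obtain ⟨x, hx⟩ := hne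
  have hanalytic : AnalyticOnNhd ℝ (frobeniusForm (Xmodel α c B γ) j k l) Set.univ :=
    fun y _ => (contDiff_frobeniusForm_Xmodel α γ c hB j k l).contDiffAt.analyticAt
  exact hanalytic.eq_of_eventuallyEq analyticOnNhd_const
    (hzero.eventuallyEq_of_mem (hΩ.mem_nhds hx))

theorem frobeniusForm_Xmodel_zero (hB : Bᵀ = -B) (j k l : Fin n) :
    frobeniusForm (Xmodel α c B γ) j k l 0 =
      -2 * (B j k * γ l + B k l * γ j + B l j * γ k) := by
  simp only [frobeniusForm, curl_Xmodel α γ c hB, Xmodel_zero, Pi.zero_apply]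
  ring

theorem pdS_curl_Xmodel (hB : Bᵀ = -B) (m j k : Fin n) (x : Fin n → ℝ) :
    pdS (curl (Xmodel α c B γ) j k) m x =
      2 * (α j * (if k = m then 1 else 0) - (if j = m then 1 else 0) * α k) := by
  have hcoord (i : Fin n) := hasFDerivAt_apply (𝕜 := ℝ) i x
  have hcurl : HasFDerivAt (fun y : Fin n → ℝ => 2 * (α j * y k - y j * α k - B j k)) _ x :=
    ((((hcoord k).const_mul (α j)).sub ((hcoord j).mul_const (α k))).sub_const (B j k)).const_mul 2
  rw [funext (curl_Xmodel α γ c hB j k), pdS, hcurl.fderiv]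
  simp [Pi.single_apply]

theorem pdS_frobeniusForm_Xmodel_zero (hB : Bᵀ = -B) {j k m : Fin n} (hmj : m ≠ j)
    (hmk : m ≠ k) :
    pdS (frobeniusForm (Xmodel α c B γ) j k m) m 0 =
      2 * (γ j * α k - α j * γ k - c * B j k) := by
  have hX := (contDiff_Xmodel α γ c (B := B)).differentiable (by simp) 0
  have hcurl (a b : Fin n) := (contDiff_curl_Xmodel α γ c hB a b).differentiable (by simp) 0
  have hskew (a b : Fin n) : B a b = -B b a := congr_fun₂ hB b a
  have hBmm : B m m = 0 := self_eq_neg.1 (hskew m m)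
  simp only [pdS_frobeniusForm hX hcurl, pdS_curl_Xmodel α γ c hB, curl_Xmodel α γ c hB,
    Xmodel_zero, pd_Xmodel, hBmm, hskew m j, hmj.symm, hmk.symm, dotp, Pi.zero_apply, mul_zero,
    Finset.sum_const_zero, if_true, if_false]
  ring

end Model

theorem stmt_10_general {n : ℕ} (hn : 3 ≤ n) {Ω : Set (Fin n → ℝ)} (hΩ : IsOpen Ω)
    (hne : Ω.Nonempty) (α γ : Fin n → ℝ) (c : ℝ)
    {B : Matrix (Fin n) (Fin n) ℝ} (hB : Bᵀ = -B)
    (hX0 : ∀ x ∈ Ω, Xmodel α c B γ x ≠ 0)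
    (hclosed : ∀ x ∈ Ω, ∀ j k : Fin n,
      pd (fun y => (normSq (Xmodel α c B γ y))⁻¹ • Xmodel α c B γ y) j k x
        = pd (fun y => (normSq (Xmodel α c B γ y))⁻¹ • Xmodel α c B γ y) k j x) :
    (∀ j k l : Fin n, B j k * γ l + B k l * γ j + B l j * γ k = 0) ∧
    (∀ j k : Fin n, c * B j k = γ j * α k - α j * γ k) := by
  have hfrobenius (j k l : Fin n) : frobeniusForm (Xmodel α c B γ) j k l = 0 := by
    refine frobeniusForm_Xmodel_eq_zero_of_eqOn α γ c hB hΩ hne fun x hx => ?_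
    have hX := (contDiff_Xmodel α γ c (B := B)).differentiable (by simp) x
    have hnorm := normSq_eq_zero_iff.not.2 (hX0 x hx)
    have hnormSq := (hasFDerivAt_normSq (Xmodel α c B γ x)).differentiableAt.comp x hX
    exact frobeniusForm_eq_zero_of_curl_smul_eq_zero (hnormSq.inv hnorm) hX (inv_ne_zero hnorm)
      (fun a b => sub_eq_zero.2 (hclosed x hx a b)) j k l
  refine ⟨fun j k l => ?_, fun j k => ?_⟩
  · have hvalue := frobeniusForm_Xmodel_zero α γ c hB j k l
    rw [hfrobenius, Pi.zero_apply] at hvalue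
    linear_combination hvalue / 2
  · obtain ⟨m, hmj, hmk⟩ := Fin.exists_ne_and_ne_of_two_lt j k hn
    have hderiv := pdS_frobeniusForm_Xmodel_zero α γ c hB hmj hmk
    have hderiv_zero : pdS (frobeniusForm (Xmodel α c B γ) j k m) m 0 = 0 := by
      simp [hfrobenius, pdS]
    linear_combination (hderiv - hderiv_zero) / 2

/-- restrictions on the parameters `(α, c, B, γ)` of a conformal Killing
field `X` which is nonvanishing and has `|X|⁻²X♭` closed on a connected open set:
`B ∧ γ = 0` and `cB = γ ∧ α`. -/
theorem stmt_10 {n : ℕ} (hn : 3 ≤ n) (Ω : Set (Fin n → ℝ)) (hΩ : IsOpen Ω)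
    (hconn : IsConnected Ω) (α γ : Fin n → ℝ) (c : ℝ)
    (B : Matrix (Fin n) (Fin n) ℝ) (hB : Bᵀ = -B)
    (hX0 : ∀ x ∈ Ω, Xmodel α c B γ x ≠ 0)
    (hclosed : ∀ x ∈ Ω, ∀ j k : Fin n,
      pd (fun y => (normSq (Xmodel α c B γ y))⁻¹ • Xmodel α c B γ y) j k x
        = pd (fun y => (normSq (Xmodel α c B γ y))⁻¹ • Xmodel α c B γ y) k j x) :
    (∀ j k l : Fin n, B j k * γ l + B k l * γ j + B l j * γ k = 0) ∧
    (∀ j k : Fin n, c * B j k = γ j * α k - α j * γ k) :=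
  stmt_10_general hn hΩ hconn.nonempty α γ c hB hX0 hclosed
end
end

section
/- Let n ≥ 3, let e₁ denote the first standard basis vector of ℝⁿ, and define F(x) = (x − e₁)/|x − e₁|² + (1/2)e₁ for x ≠ e₁. Then for every x ∈ ℝⁿ with x ≠ e₁ and x ≠ −e₁: |F(x)|² = |x + e₁|²/(4|x − e₁|²), and log(2|F(x)|) = artanh( 2(e₁·x)/(|x|² + 1) ). -/
open scoped BigOperators
open Matrix

noncomputable section

/-- The real inverse hyperbolic tangent, `artanh t = ½ log((1+t)/(1−t))` for `|t| < 1`. -/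
def artanh (t : ℝ) : ℝ := (1 / 2) * Real.log ((1 + t) / (1 - t))

/-- The `i`-th standard basis vector of `ℝⁿ`. -/
def stdBasis {n : ℕ} (i : ℕ) (h : i < n) : Fin n → ℝ := Pi.single (⟨i, h⟩ : Fin n) (1 : ℝ)

/-- The conformal map `F(x) = (x − e₁)/|x − e₁|² + ½ e₁`. -/
def F16 {n : ℕ} (e₁ : Fin n → ℝ) (x : Fin n → ℝ) : Fin n → ℝ :=
  (normSq (x - e₁))⁻¹ • (x - e₁) + (1 / 2 : ℝ) • e₁

/-!
With `u = x - e` and `|e| = 1`, the vector `F(x) = u/|u|² + e/2` satisfies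
`4|u|²|F(x)|² = 4 + 4 u·e + |u|² = |u + 2e|² = |x + e|²`, so `2|F(x)| = |x + e| / |x - e|`.
On the other hand `|x ± e|² = (|x|² + 1) ± 2 e·x`, and `artanh (a/b)` is half the logarithm of
`(b + a)/(b - a)`; take `a = 2 e·x` and `b = |x|² + 1`.
-/

section

variable {n : ℕ} {u e x : Fin n → ℝ}

theorem dotp_eq_dotProduct (u v : Fin n → ℝ) : dotp u v = u ⬝ᵥ v := rfl

theorem normSq_eq_dotProduct (u : Fin n → ℝ) : normSq u = u ⬝ᵥ u := by
  simp only [normSq, dotProduct, sq]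

theorem normSq_nonneg (u : Fin n → ℝ) : 0 ≤ normSq u :=
  Finset.sum_nonneg fun i _ => sq_nonneg (u i)

theorem normSq_ne_zero : normSq u ≠ 0 ↔ u ≠ 0 := by
  rw [normSq_eq_dotProduct, ne_eq, dotProduct_self_eq_zero]

theorem normSq_sub_ne_zero : normSq (x - e) ≠ 0 ↔ x ≠ e :=
  normSq_ne_zero.trans sub_ne_zero

theorem normSq_add_ne_zero : normSq (x + e) ≠ 0 ↔ x ≠ -e :=
  normSq_ne_zero.trans add_eq_zero_iff_eq_neg.not

theorem normSq_smul (a : ℝ) (u : Fin n → ℝ) : normSq (a • u) = a ^ 2 * normSq u := by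
  simp only [normSq_eq_dotProduct, smul_dotProduct, dotProduct_smul, smul_eq_mul]
  ring

theorem dotp_smul_smul (a b : ℝ) (u v : Fin n → ℝ) :
    dotp (a • u) (b • v) = a * b * dotp u v := by
  simp only [dotp_eq_dotProduct, smul_dotProduct, dotProduct_smul, smul_eq_mul]
  ring

theorem normSq_add (u v : Fin n → ℝ) :
    normSq (u + v) = normSq u + 2 * dotp u v + normSq v := by
  simp only [normSq_eq_dotProduct, dotp_eq_dotProduct, add_dotProduct, dotProduct_add,
    dotProduct_comm v u]
  ring

theorem normSq_smul_add_smul (a b : ℝ) (u v : Fin n → ℝ) :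
    normSq (a • u + b • v) = a ^ 2 * normSq u + 2 * (a * b) * dotp u v + b ^ 2 * normSq v := by
  rw [normSq_add, normSq_smul, normSq_smul, dotp_smul_smul, mul_assoc 2]

theorem normSq_stdBasis (i : ℕ) (h : i < n) : normSq (stdBasis i h) = 1 := by
  rw [normSq_eq_dotProduct, _root_.stdBasis, single_one_dotProduct, Pi.single_eq_same]

theorem normSq_add_of_normSq_eq_one (he : normSq e = 1) (x : Fin n → ℝ) :
    normSq (x + e) = normSq x + 1 + 2 * dotp e x := by
  rw [normSq_add, he, dotp_eq_dotProduct, dotp_eq_dotProduct, dotProduct_comm]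
  ring

theorem normSq_sub_of_normSq_eq_one (he : normSq e = 1) (x : Fin n → ℝ) :
    normSq (x - e) = normSq x + 1 - 2 * dotp e x := by
  have he_neg : normSq (-e) = 1 := by rw [← neg_one_smul ℝ e, normSq_smul, he]; norm_num
  have hdot : dotp (-e) x = -dotp e x := neg_dotProduct e x
  rw [sub_eq_add_neg, normSq_add_of_normSq_eq_one he_neg, hdot]
  ring

theorem normSq_F16 (he : normSq e = 1) (hx : x ≠ e) :
    normSq (F16 e x) = normSq (x + e) / (4 * normSq (x - e)) := by
  have hu : normSq (x - e) ≠ 0 := normSq_sub_ne_zero.mpr hx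
  have hsum : normSq (x + e) = normSq (x - e) + 4 * dotp (x - e) e + 4 := by
    have hxe : x + e = (1 : ℝ) • (x - e) + (2 : ℝ) • e := by module
    rw [hxe, normSq_smul_add_smul, he]
    ring
  rw [F16, normSq_smul_add_smul, he, hsum]
  field_simp
  ring

theorem log_two_mul_sqrt_normSq_F16 (he : normSq e = 1) (hx : x ≠ e) (hx' : x ≠ -e) :
    Real.log (2 * √(normSq (F16 e x))) =
      (Real.log (normSq (x + e)) - Real.log (normSq (x - e))) / 2 := by
  have hsub : normSq (x - e) ≠ 0 := normSq_sub_ne_zero.mpr hx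
  have hadd : normSq (x + e) ≠ 0 := normSq_add_ne_zero.mpr hx'
  have hsqrt : 2 * √(normSq (F16 e x)) = √(normSq (x + e) / normSq (x - e)) := by
    calc 2 * √(normSq (F16 e x)) = √(2 ^ 2 * normSq (F16 e x)) := by
          rw [Real.sqrt_mul (sq_nonneg 2), Real.sqrt_sq zero_le_two]
      _ = √(normSq (x + e) / normSq (x - e)) := by
          rw [normSq_F16 he hx]
          congr 1
          field_simp
          norm_num
  rw [hsqrt, Real.log_sqrt (div_nonneg (normSq_nonneg _) (normSq_nonneg _)),
    Real.log_div hadd hsub]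

theorem artanh_div {a b : ℝ} (hb : b ≠ 0) (hadd : b + a ≠ 0) (hsub : b - a ≠ 0) :
    artanh (a / b) = (Real.log (b + a) - Real.log (b - a)) / 2 := by
  rw [artanh, one_add_div hb, one_sub_div hb, div_div_div_cancel_right₀ hb,
    Real.log_div hadd hsub, one_div_mul_eq_div]

theorem artanh_two_mul_dotp_div (he : normSq e = 1) (hx : x ≠ e) (hx' : x ≠ -e) :
    artanh (2 * dotp e x / (normSq x + 1)) =
      (Real.log (normSq (x + e)) - Real.log (normSq (x - e))) / 2 := by
  have hsub : normSq (x - e) ≠ 0 := normSq_sub_ne_zero.mpr hx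
  have hadd : normSq (x + e) ≠ 0 := normSq_add_ne_zero.mpr hx'
  rw [normSq_add_of_normSq_eq_one he] at hadd ⊢
  rw [normSq_sub_of_normSq_eq_one he] at hsub ⊢
  exact artanh_div (add_pos_of_nonneg_of_pos (normSq_nonneg x) one_pos).ne' hadd hsub

theorem stmt_16_general (he : normSq e = 1) (hx : x ≠ e) (hx' : x ≠ -e) :
    normSq (F16 e x) = normSq (x + e) / (4 * normSq (x - e)) ∧
      Real.log (2 * √(normSq (F16 e x))) = artanh (2 * dotp e x / (normSq x + 1)) :=
  ⟨normSq_F16 he hx,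
    (log_two_mul_sqrt_normSq_F16 he hx hx').trans (artanh_two_mul_dotp_div he hx hx').symm⟩

end

/-- for the conformal map `F(x) = (x−e₁)/|x−e₁|² + ½e₁` one has
`|F(x)|² = |x+e₁|²/(4|x−e₁|²)` and `log(2|F(x)|) = artanh(2(e₁·x)/(|x|²+1))`,
so the log-type and artanh-type weights lie in the same conformal orbit. -/
theorem stmt_16 {n : ℕ} (hn : 3 ≤ n) (x : Fin n → ℝ)
    (hx1 : x ≠ stdBasis 0 (by omega)) (hx2 : x ≠ -stdBasis 0 (by omega)) :
    normSq (F16 (stdBasis 0 (by omega)) x)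
        = normSq (x + stdBasis 0 (by omega)) / (4 * normSq (x - stdBasis 0 (by omega))) ∧
    Real.log (2 * Real.sqrt (normSq (F16 (stdBasis 0 (by omega)) x)))
        = artanh (2 * dotp (stdBasis 0 (by omega)) x / (normSq x + 1)) :=
  stmt_16_general (normSq_stdBasis _ _) hx1 hx2
end
end
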